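/- arXiv:2306.14765 — 2 statements merged into one kernel-verified Lean document; each statement's English description precedes it below -/
import Mathlib

section
/- Let M be a positive integer and C : ℤ → ℂ an M-periodic function with mean value zero (i.e., the sum of C(n) for n = 1 to M is 0). Then the L-series L(s, C) = Σ_{n≥1} C(n)/n^s converges for Re(s) > 1 and its value extended to s = 0 is given by L(0, C) = -Σ_{n=1}^{M} C(n)·B₁(n/M), where B₁(x) = x - 1/2 is the first Bernoulli polynomial. -/
open Complex Finset

lemma aux_deriv (N : ℝ) (hN : 0 < N) (s : ℂ) (x : ℝ) (hx : 0 ≤ x) :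
    HasDerivAt (fun y : ℝ => ((N : ℂ) + (y : ℂ)) ^ s) (s * ((N : ℂ) + (x : ℂ)) ^ (s - 1)) x := by
  have h1 : HasDerivAt (fun z : ℂ => ((N : ℂ) + z)) 1 (x : ℂ) := by
    simpa using (hasDerivAt_id (x : ℂ)).const_add (N : ℂ)
  have h2 : (N : ℂ) + (x : ℂ) ∈ Complex.slitPlane := by
    rw [← ofReal_add]
    exact Complex.ofReal_mem_slitPlane.2 (by linarith)
  have := (h1.cpow_const (c := s) h2).comp_ofReal
  simpa using this

lemma aux_norm (N : ℝ) (hN : 1 ≤ N) (s : ℂ) (x : ℝ) (hx : 0 ≤ x) (hs : s.re ≤ -3/2) :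
    ‖((N : ℂ) + (x : ℂ)) ^ s‖ ≤ N ^ (-3/2 : ℝ) := by
  rw [← ofReal_add, Complex.norm_cpow_eq_rpow_re_of_pos (by linarith)]
  calc (N + x) ^ s.re ≤ (N + x) ^ (-3/2 : ℝ) :=
        Real.rpow_le_rpow_of_exponent_le (by linarith) hs
    _ ≤ N ^ (-3/2 : ℝ) :=
        Real.rpow_le_rpow_of_nonpos (by linarith) (by linarith) (by norm_num)

lemma aux_bound (N : ℝ) (hN : 1 ≤ N) (s : ℂ) (hs : -1/2 < s.re) (hs' : ‖s‖ ≤ 4)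
    (a : ℝ) (ha : a ∈ Set.Icc (0:ℝ) 1) :
    ‖((N : ℂ) + (a : ℂ)) ^ (-s) - (1 - a) * (N : ℂ) ^ (-s) - a * ((N : ℂ) + 1) ^ (-s)‖
      ≤ 40 * N ^ (-3/2 : ℝ) := by
  set K : ℝ := 20 * N ^ (-3/2 : ℝ) with hK
  have hK0 : 0 ≤ K := by positivity
  have hN0 : 0 < N := by linarith
  -- first derivative increments
  have hd : ∀ x ∈ Set.Icc (0:ℝ) 1,
      ‖(-s) * ((N : ℂ) + (x : ℂ)) ^ (-s - 1) - (-s) * (N : ℂ) ^ (-s - 1)‖ ≤ K := by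
    intro x hx
    have := norm_image_sub_le_of_norm_deriv_le_segment' (a := 0) (b := 1) (C := K)
      (f := fun x : ℝ => (-s) * ((N : ℂ) + (x : ℂ)) ^ (-s - 1))
      (f' := fun x : ℝ => (-s) * ((-s - 1) * ((N : ℂ) + (x : ℂ)) ^ (-s - 1 - 1)))
      (fun x hx => ((aux_deriv N hN0 (-s - 1) x hx.1).const_mul (-s)).hasDerivWithinAt)
      (by
        intro x hx
        rw [norm_mul, norm_mul, norm_neg]
        have h1 : ‖-s - 1‖ ≤ 5 := by
          calc ‖-s - 1‖ ≤ ‖-s‖ + ‖(1:ℂ)‖ := norm_sub_le _ _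
            _ ≤ 5 := by rw [norm_neg, norm_one]; linarith
        have h2 := aux_norm N hN (-s - 1 - 1) x hx.1 (by simp; linarith)
        calc ‖s‖ * (‖-s - 1‖ * ‖((N : ℂ) + (x : ℂ)) ^ (-s - 1 - 1)‖)
            ≤ 4 * (5 * N ^ (-3/2 : ℝ)) := by gcongr
          _ = K := by rw [hK]; ring) x hx
    simp only [ofReal_zero, add_zero, sub_zero] at this
    exact this.trans (mul_le_of_le_one_right hK0 hx.2)
  have hg : ∀ x ∈ Set.Icc (0:ℝ) 1,
      ‖((N : ℂ) + (x : ℂ)) ^ (-s) - x * ((-s) * (N : ℂ) ^ (-s - 1)) - (N : ℂ) ^ (-s)‖ ≤ K := by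
    intro x hx
    have := norm_image_sub_le_of_norm_deriv_le_segment' (a := 0) (b := 1) (C := K)
      (f := fun x : ℝ => ((N : ℂ) + (x : ℂ)) ^ (-s) - x * ((-s) * (N : ℂ) ^ (-s - 1)))
      (f' := fun x : ℝ => (-s) * ((N : ℂ) + (x : ℂ)) ^ (-s - 1) - (-s) * (N : ℂ) ^ (-s - 1))
      (by
        intro x hx
        have h1 := aux_deriv N hN0 (-s) x hx.1
        have h2 : HasDerivAt (fun y : ℝ => (y : ℂ) * ((-s) * (N : ℂ) ^ (-s - 1)))
            ((-s) * (N : ℂ) ^ (-s - 1)) x := by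
          simpa using (Complex.ofRealCLM.hasDerivAt (x := x)).mul_const ((-s) * (N : ℂ) ^ (-s - 1))
        exact (h1.sub h2).hasDerivWithinAt)
      (fun x hx => hd x ⟨hx.1, hx.2.le⟩) x hx
    simp only [ofReal_zero, add_zero, sub_zero, zero_mul] at this
    exact this.trans (mul_le_of_le_one_right hK0 hx.2)
  have e1 := hg a ha
  have e2 := hg 1 ⟨zero_le_one, le_rfl⟩
  rw [ofReal_one] at e2
  have e3 : ((N : ℂ) + (a : ℂ)) ^ (-s) - (1 - a) * (N : ℂ) ^ (-s) - a * ((N : ℂ) + 1) ^ (-s)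
    = (((N : ℂ) + (a : ℂ)) ^ (-s) - a * ((-s) * (N : ℂ) ^ (-s - 1)) - (N : ℂ) ^ (-s))
      - a * (((N : ℂ) + 1) ^ (-s) - 1 * ((-s) * (N : ℂ) ^ (-s - 1)) - (N : ℂ) ^ (-s)) := by ring
  rw [e3]
  refine (norm_sub_le _ _).trans ?_
  rw [norm_mul, Complex.norm_real, Real.norm_of_nonneg ha.1]
  have : a * ‖((N : ℂ) + 1) ^ (-s) - 1 * ((-s) * (N : ℂ) ^ (-s - 1)) - (N : ℂ) ^ (-s)‖ ≤ 1 * K :=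
    mul_le_mul ha.2 e2 (norm_nonneg _) zero_le_one
  linarith

/-- Value of the Hurwitz zeta function at `0`. -/
lemma aux_hurwitz_zero (a : ℝ) (ha0 : 0 < a) (ha1 : a ≤ 1) :
    HurwitzZeta.hurwitzZeta (a : UnitAddCircle) 0 = 1 / 2 - a := by
  set F : ℕ → ℂ → ℂ := fun n s =>
    ((((n : ℝ) + 1 : ℝ) : ℂ) + (a : ℂ)) ^ (-s) - (1 - a) * (((n : ℝ) + 1 : ℝ) : ℂ) ^ (-s)
      - a * ((((n : ℝ) + 1 : ℝ) : ℂ) + 1) ^ (-s) with hF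
  set U : Set ℂ := {s | -1/2 < s.re} ∩ Metric.ball 0 4 with hU
  have hUo : IsOpen U := (isOpen_lt continuous_const continuous_re).inter Metric.isOpen_ball
  have hUc : IsPreconnected U :=
    ((convex_halfSpace_re_gt (-1/2)).inter (convex_ball 0 4)).isPreconnected
  have hcd : ∀ x : ℝ, 0 < x → Differentiable ℂ (fun s : ℂ => (x : ℂ) ^ (-s)) := by
    intro x hx s
    exact (differentiable_neg s).const_cpow (Or.inl (by exact_mod_cast hx.ne'))
  have hsum : Summable (fun n : ℕ => 40 * ((n : ℝ) + 1) ^ (-3/2 : ℝ)) := by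
    refine Summable.mul_left _ ?_
    have := (summable_nat_add_iff 1).2 (Real.summable_nat_rpow (p := -3/2) |>.2 (by norm_num))
    simpa using this
  have hGd : DifferentiableOn ℂ (fun s => ∑' n, F n s) U := by
    refine Complex.differentiableOn_tsum_of_summable_norm hsum ?_ hUo ?_
    · intro n
      have p : (0:ℝ) < (n : ℝ) + 1 := by positivity
      have h1 := hcd ((n : ℝ) + 1 + a) (by linarith)
      have h2 := hcd ((n : ℝ) + 1) p
      have h3 := hcd ((n : ℝ) + 1 + 1) (by linarith)
      rw [ofReal_add _ a] at h1
      rw [ofReal_add _ 1, ofReal_one] at h3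
      exact ((h1.sub (h2.const_mul (1 - (a:ℂ)))).sub (h3.const_mul (a : ℂ))).differentiableOn
    · intro n s hs
      have hs2 : ‖s‖ < 4 := by simpa using hs.2
      exact aux_bound ((n : ℝ) + 1) (by simp) s hs.1 hs2.le a ⟨ha0.le, ha1⟩
  set H : ℂ → ℂ := fun s => (HurwitzZeta.hurwitzZeta (a : UnitAddCircle) s
    - HurwitzZeta.hurwitzZeta ((1 : ℝ) : UnitAddCircle) s) - (a : ℂ) ^ (-s) + a with hH
  have hHd : Differentiable ℂ H :=
    ((HurwitzZeta.differentiable_hurwitzZeta_sub_hurwitzZeta _ _).sub (hcd a ha0)).add_const _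
  have heq : ∀ s : ℂ, 1 < s.re → H s = ∑' n, F n s := by
    intro s hs
    have h1 := HurwitzZeta.hasSum_hurwitzZeta_of_one_lt_re (a := a) ⟨ha0.le, ha1⟩ hs
    have h2 := HurwitzZeta.hasSum_hurwitzZeta_of_one_lt_re (a := 1) ⟨zero_le_one, le_rfl⟩ hs
    have h1' := (hasSum_nat_add_iff' 1).2 h1
    have h2' := (hasSum_nat_add_iff' 1).2 h2
    have h3 := (h1'.sub (h2.mul_left (1 - (a:ℂ)))).sub (h2'.mul_left (a : ℂ))
    rw [← h3.tsum_eq.symm.trans (tsum_congr _)]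
    · simp [hH, Complex.cpow_neg]
      ring
    · intro n
      simp [hF, Complex.cpow_neg]
  have key : Set.EqOn H (fun s => ∑' n, F n s) U := by
    refine AnalyticOnNhd.eqOn_of_preconnected_of_eventuallyEq
      (hHd.differentiableOn.analyticOnNhd hUo) (hGd.analyticOnNhd hUo) hUc (z₀ := 2) ?_ ?_
    · constructor
      · simp; norm_num
      · simp; norm_num
    · have : {s : ℂ | 1 < s.re} ∈ nhds (2 : ℂ) :=
        (isOpen_lt continuous_const continuous_re).mem_nhds (by simp)
      filter_upwards [this] with s hs using heq s hs
  have k0 := key (x := 0) (by constructor <;> simp; norm_num)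
  have hF0 : ∀ n, F n 0 = 0 := by intro n; simp [hF]
  simp only [hF0, tsum_zero] at k0
  have e : ((1 : ℝ) : UnitAddCircle) = 0 := AddCircle.coe_period 1
  simp only [hH, e, HurwitzZeta.hurwitzZeta_zero, riemannZeta_zero, neg_zero, cpow_zero] at k0
  linear_combination k0

theorem stmt_2 (M : ℕ) (hM : 0 < M) (C : ℤ → ℂ)
    (hper : ∀ n : ℤ, C (n + M) = C n)
    (hmean : ∑ n ∈ Finset.Icc 1 (M : ℤ), C n = 0) :
    (∀ s : ℂ, 1 < s.re → Summable (fun n : ℕ => C (n + 1) / ((n : ℂ) + 1) ^ s)) ∧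
    ((M : ℂ) ^ (-(0 : ℂ)) * ∑ n ∈ Finset.Icc 1 (M : ℤ),
        C n * HurwitzZeta.hurwitzZeta (((n : ℝ) / (M : ℝ) : ℝ) : UnitAddCircle) 0
      = -∑ n ∈ Finset.Icc 1 (M : ℤ), C n * ((n : ℂ) / (M : ℂ) - 1 / 2)) := by
  constructor
  · intro s hs
    have hMz : (0 : ℤ) < M := by exact_mod_cast hM
    have hb : ∀ n : ℤ, ‖C n‖ ≤ ∑ k ∈ Finset.Ico 0 (M : ℤ), ‖C k‖ := by
      intro n
      have hp : Function.Periodic C (M : ℤ) := hper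
      have h1 : C n = C (n % M) := by
        have h2 := hp.sub_zsmul_eq (x := n) (n / M)
        rw [← h2]
        congr 1
        rw [Int.emod_def, smul_eq_mul, mul_comm]
      rw [h1]
      exact Finset.single_le_sum (f := fun k => ‖C k‖) (fun _ _ => norm_nonneg _)
        (Finset.mem_Ico.2 ⟨Int.emod_nonneg _ hMz.ne', Int.emod_lt_of_pos _ hMz⟩)
    have hS := ((summable_nat_add_iff 1).2 (Complex.summable_one_div_nat_cpow.2 hs)).norm
    refine Summable.of_norm_bounded
      (hS.mul_left (∑ k ∈ Finset.Ico 0 (M : ℤ), ‖C k‖)) ?_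
    intro n
    rw [div_eq_mul_one_div, norm_mul]
    push_cast
    gcongr
    exact hb _
  · rw [neg_zero, cpow_zero, one_mul, ← Finset.sum_neg_distrib]
    refine Finset.sum_congr rfl fun n hn => ?_
    rw [Finset.mem_Icc] at hn
    have hM' : (0 : ℝ) < M := by exact_mod_cast hM
    have h1 : (0 : ℝ) < n := by exact_mod_cast (by omega : 0 < n)
    have h2 : (n : ℝ) ≤ M := by exact_mod_cast hn.2
    rw [aux_hurwitz_zero _ (div_pos h1 hM') ((div_le_one hM').2 h2)]
    push_cast
    ring
end

section
/- Let M be a positive integer and C : ℤ → ℂ an M-periodic function with mean value zero. Then for every nonnegative integer r, L(-r, C) = -(M^r/(r+1))·Σ_{n=1}^M C(n)·B_{r+1}(n/M), where B_k is the k-th Bernoulli polynomial and L(s,C) is the holomorphic continuation of Σ_{n≥1} C(n)/n^s. -/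
open Complex Finset

lemma interp_bound (f f' f'' : ℝ → ℂ) (K : ℝ)
    (hf : ∀ t ∈ Set.Icc (0:ℝ) 1, HasDerivAt f (f' t) t)
    (hf' : ∀ t ∈ Set.Icc (0:ℝ) 1, HasDerivAt f' (f'' t) t)
    (hK : ∀ t ∈ Set.Icc (0:ℝ) 1, ‖f'' t‖ ≤ K) (y : ℝ) (hy : y ∈ Set.Icc (0:ℝ) 1) :
    ‖f y - f 0 + y * (f 0 - f 1)‖ ≤ K := by
  have h0 : (0:ℝ) ∈ Set.Icc (0:ℝ) 1 := by simp
  have h1 : (1:ℝ) ∈ Set.Icc (0:ℝ) 1 := by simp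
  have hK0 : 0 ≤ K := (norm_nonneg _).trans (hK 0 h0)
  have A : ∀ a ∈ Set.Icc (0:ℝ) 1, ∀ b ∈ Set.Icc (0:ℝ) 1, ‖f' b - f' a‖ ≤ K := by
    intro a ha b hb
    have := (convex_Icc (0:ℝ) 1).norm_image_sub_le_of_norm_hasDerivWithin_le
      (fun t ht => (hf' t ht).hasDerivWithinAt) hK ha hb
    refine this.trans ?_
    have : ‖b - a‖ ≤ 1 := by
      rw [Real.norm_eq_abs, abs_le]; constructor <;> linarith [ha.1, ha.2, hb.1, hb.2]
    nlinarith
  have B : ∀ a ∈ Set.Icc (0:ℝ) 1, ‖f' a + (f 0 - f 1)‖ ≤ K := by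
    intro a ha
    have := (convex_Icc (0:ℝ) 1).norm_image_sub_le_of_norm_hasDerivWithin_le
      (f := fun t : ℝ => f t - t * f' a) (f' := fun t => f' t - 1 * f' a) (C := K)
      (fun t ht => ((hf t ht).sub
        ((Complex.ofRealCLM.hasDerivAt (x := t)).mul_const (f' a))).hasDerivWithinAt)
      (fun t ht => by simpa using A a ha t ht) h0 h1
    rw [← norm_neg]
    simp at this
    have e : -(f' a + (f 0 - f 1)) = f 1 - f' a - f 0 := by ring
    rw [e]; exact this
  have := (convex_Icc (0:ℝ) 1).norm_image_sub_le_of_norm_hasDerivWithin_le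
      (f := fun t : ℝ => f t + t * (f 0 - f 1)) (f' := fun t => f' t + 1 * (f 0 - f 1)) (C := K)
      (fun t ht => ((hf t ht).add
        ((Complex.ofRealCLM.hasDerivAt (x := t)).mul_const (f 0 - f 1))).hasDerivWithinAt)
      (fun t ht => by simpa using B t ht) h0 hy
  have e : f y - f 0 + y * (f 0 - f 1) = (f y + y * (f 0 - f 1)) - (f 0 + (0:ℝ) * (f 0 - f 1)) := by
    simp; ring
  rw [e]
  refine this.trans ?_
  have : ‖y - 0‖ ≤ 1 := by
    rw [Real.norm_eq_abs, abs_le]; constructor <;> linarith [hy.1, hy.2]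
  nlinarith

/-- The summand. -/
noncomputable def hTerm (x : ℝ) (n : ℕ) (s : ℂ) : ℂ :=
  ((n + 1 + x : ℝ) : ℂ) ^ (-s) - ((n + 1 : ℝ) : ℂ) ^ (-s)
    + x * (((n + 1 : ℝ) : ℂ) ^ (-s) - ((n + 1 + 1 : ℝ) : ℂ) ^ (-s))

lemma hasDerivAt_cpow_shift (c t : ℝ) (h : 0 < c + t) (w : ℂ) :
    HasDerivAt (fun t : ℝ => ((c + t : ℝ) : ℂ) ^ w) (w * ((c + t : ℝ) : ℂ) ^ (w - 1)) t := by
  have h1 : HasDerivAt (fun z : ℂ => (c : ℂ) + z) 1 (t : ℂ) := (hasDerivAt_id _).const_add _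
  have h2 : (c : ℂ) + (t : ℂ) ∈ slitPlane := by
    rw [← ofReal_add]; exact Or.inl (by simpa using h)
  have := (h1.cpow_const (c := w) h2).comp_ofReal
  simpa using this

lemma hTerm_bound (x : ℝ) (hx : x ∈ Set.Icc (0:ℝ) 1) (n : ℕ) (s : ℂ) (hs : -(1/2) < s.re)
    (hs3 : ‖s‖ < 3) : ‖hTerm x n s‖ ≤ 12 * ((n + 1 : ℝ)) ^ (-(3/2) : ℝ) := by
  have hn : (0:ℝ) ≤ n := n.cast_nonneg
  have := interp_bound (fun t => ((n + 1 + t : ℝ) : ℂ) ^ (-s))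
    (fun t => (-s) * ((n + 1 + t : ℝ) : ℂ) ^ (-s - 1))
    (fun t => (-s) * ((-s - 1) * ((n + 1 + t : ℝ) : ℂ) ^ (-s - 1 - 1)))
    (12 * ((n + 1 : ℝ)) ^ (-(3/2) : ℝ))
    (fun t ht => hasDerivAt_cpow_shift _ t (by linarith [ht.1]) _)
    (fun t ht => (hasDerivAt_cpow_shift _ t (by linarith [ht.1]) _).const_mul _)
    (fun t ht => by
      have hp : (0:ℝ) < n + 1 + t := by linarith [ht.1]
      rw [norm_mul, norm_mul, norm_cpow_eq_rpow_re_of_pos hp, norm_neg]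
      have h4 : ‖-s - 1‖ ≤ 4 := by
        calc ‖-s - 1‖ ≤ ‖-s‖ + ‖(1:ℂ)‖ := norm_sub_le _ _
          _ ≤ 4 := by simp; linarith
      have h5 : (n + 1 + t : ℝ) ^ (-s - 1 - 1).re ≤ (n + 1 : ℝ) ^ (-(3/2) : ℝ) := by
        calc (n + 1 + t : ℝ) ^ (-s - 1 - 1).re ≤ (n + 1 + t : ℝ) ^ (-(3/2) : ℝ) := by
              apply Real.rpow_le_rpow_of_exponent_le
              · linarith [ht.1]
              · simp; linarith
          _ ≤ _ := Real.rpow_le_rpow_of_nonpos (by linarith) (by linarith [ht.1]) (by norm_num)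
      calc ‖s‖ * (‖-s - 1‖ * (n + 1 + t : ℝ) ^ (-s - 1 - 1).re)
          ≤ 3 * (4 * (n + 1 : ℝ) ^ (-(3/2) : ℝ)) := by gcongr
        _ = _ := by ring) x hx
  simpa [hTerm] using this

lemma hasSum_hTerm (x : ℝ) (hx0 : 0 < x) (hx1 : x ≤ 1) (s : ℂ) (hs : 1 < s.re) :
    HasSum (fun n => hTerm x n s)
      (HurwitzZeta.hurwitzZeta (x : UnitAddCircle) s - (x : ℂ) ^ (-s)
        - HurwitzZeta.hurwitzZeta ((1 : ℝ) : UnitAddCircle) s + x) := by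
  have a := HurwitzZeta.hasSum_hurwitzZeta_of_one_lt_re (a := x) ⟨hx0.le, hx1⟩ hs
  have b := HurwitzZeta.hasSum_hurwitzZeta_of_one_lt_re (a := 1) ⟨zero_le_one, le_rfl⟩ hs
  have a' := (hasSum_nat_add_iff' 1).mpr a
  have b' := (hasSum_nat_add_iff' 1).mpr b
  have := (a'.sub b).add ((b.sub b').mul_left (x : ℂ))
  convert! this using 1
  · ext n
    simp [hTerm, cpow_neg]
  · simp [cpow_neg]

lemma hurwitz_zero (x : ℝ) (hx0 : 0 < x) (hx1 : x ≤ 1) :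
    HurwitzZeta.hurwitzZeta (x : UnitAddCircle) 0 = 1 / 2 - x := by
  set U : Set ℂ := {s : ℂ | -(1/2) < s.re} ∩ Metric.ball 0 3 with hU
  have hUo : IsOpen U := (isOpen_lt continuous_const continuous_re).inter Metric.isOpen_ball
  have hUc : IsPreconnected U :=
    ((convex_halfSpace_re_gt _).inter (convex_ball _ _)).isPreconnected
  have hpos : ∀ n : ℕ, (0:ℝ) < n + 1 := fun n => by positivity
  have hsum : Summable (fun n : ℕ => 12 * ((n + 1 : ℝ)) ^ (-(3/2) : ℝ)) := by
    apply Summable.mul_left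
    have := (summable_nat_add_iff 1).mpr
      (Real.summable_nat_rpow (p := (-(3/2) : ℝ)).mpr (by norm_num))
    simpa using this
  have hF : DifferentiableOn ℂ (fun s => ∑' n, hTerm x n s) U := by
    apply differentiableOn_tsum_of_summable_norm hsum _ hUo
    · intro n s hs
      exact hTerm_bound x ⟨hx0.le, hx1⟩ n s hs.1 (by simpa using hs.2)
    · intro n
      have key : ∀ c : ℝ, 0 < c → Differentiable ℂ (fun s : ℂ => (c : ℂ) ^ (-s)) := by
        intro c hc s
        exact (differentiableAt_id.neg).const_cpow (Or.inl (by exact_mod_cast hc.ne'))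
      have k1 := key (n + 1 + x) (by linarith [hpos n])
      have k2 := key (n + 1) (hpos n)
      have k3 := key (n + 1 + 1) (by linarith [hpos n])
      exact ((k1.sub k2).add ((k2.sub k3).const_mul _)).differentiableOn
  have hG : DifferentiableOn ℂ (fun s => HurwitzZeta.hurwitzZeta (x : UnitAddCircle) s
      - HurwitzZeta.hurwitzZeta ((1 : ℝ) : UnitAddCircle) s - (x : ℂ) ^ (-s) + x) U := by
    refine Differentiable.differentiableOn ?_
    refine ((HurwitzZeta.differentiable_hurwitzZeta_sub_hurwitzZeta _ _).sub ?_).add_const _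
    intro s
    exact (differentiableAt_id.neg).const_cpow (Or.inl (by exact_mod_cast hx0.ne'))
  have h2 : (2 : ℂ) ∈ U := by constructor <;> norm_num
  have h0 : (0 : ℂ) ∈ U := by constructor <;> norm_num
  have := (hF.analyticOnNhd hUo).eqOn_of_preconnected_of_eventuallyEq (hG.analyticOnNhd hUo)
    hUc h2 (by
      have : {s : ℂ | 1 < s.re} ∈ nhds (2 : ℂ) :=
        (isOpen_lt continuous_const continuous_re).mem_nhds (by norm_num)
      filter_upwards [this] with s hs
      rw [(hasSum_hTerm x hx0 hx1 s hs).tsum_eq]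
      ring) h0
  have h1 : ((1 : ℝ) : UnitAddCircle) = 0 := AddCircle.coe_period 1
  simp only [hTerm, h1, HurwitzZeta.hurwitzZeta_zero, riemannZeta_zero] at this
  simp at this
  linear_combination -this

lemma hurwitz_neg_nat (x : ℚ) (hx0 : 0 < x) (hx1 : x ≤ 1) (r : ℕ) :
    HurwitzZeta.hurwitzZeta (((x : ℝ)) : UnitAddCircle) (-(r : ℂ)) =
      -1 / (r + 1) * (((Polynomial.bernoulli (r + 1)).eval x : ℚ) : ℂ) := by
  have hx0' : (0:ℝ) < x := by exact_mod_cast hx0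
  have hx1' : (x:ℝ) ≤ 1 := by exact_mod_cast hx1
  rcases eq_or_ne r 0 with rfl | hr
  · simp only [Nat.cast_zero, neg_zero, hurwitz_zero _ hx0' hx1']
    simp
  · rw [HurwitzZeta.hurwitzZeta_neg_nat hr ⟨hx0'.le, hx1'⟩]
    congr 1
    have : (((x : ℝ)) : ℂ) = algebraMap ℚ ℂ x := by simp
    rw [this, Polynomial.eval_map_algebraMap, Polynomial.aeval_algebraMap_apply]
    simp

theorem stmt_4 (M : ℕ) (hM : 0 < M) (C : ℤ → ℂ)
    (hper : ∀ n : ℤ, C (n + M) = C n)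
    (hmean : ∑ n ∈ Finset.Icc 1 (M : ℤ), C n = 0) (r : ℕ) :
    (M : ℂ) ^ (-(-(r : ℂ))) * ∑ n ∈ Finset.Icc 1 (M : ℤ),
        C n * HurwitzZeta.hurwitzZeta (((n : ℝ) / (M : ℝ) : ℝ) : UnitAddCircle) (-(r : ℂ))
      = -((M : ℂ) ^ r / ((r : ℂ) + 1)) * ∑ n ∈ Finset.Icc 1 (M : ℤ),
          C n * (((Polynomial.bernoulli (r + 1)).eval ((n : ℚ) / (M : ℚ)) : ℚ) : ℂ) := by
  rw [neg_neg, cpow_natCast, Finset.mul_sum, Finset.mul_sum]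
  refine Finset.sum_congr rfl fun n hn => ?_
  rw [Finset.mem_Icc] at hn
  have hM' : (0:ℚ) < M := by exact_mod_cast hM
  have h1 : (0:ℚ) < n := by exact_mod_cast (by lia : 0 < n)
  have h2 : (n:ℚ) ≤ M := by exact_mod_cast hn.2
  have := hurwitz_neg_nat ((n : ℚ) / M) (by positivity) ((div_le_one hM').mpr h2) r
  push_cast at this
  rw [this]
  ring
end
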